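/- Let H be a finite group and ρ : H → U(m) a faithful unitary representation on ℂᵐ (m ≥ 1). Let H act on ℂᵐ × ℂᵐ by h·(z,w) = (ρ(h)z, \overline{ρ(h)}w), where \overline{ρ(h)} is the entrywise complex conjugate matrix (the dual representation on the second factor). Then the set of points of ℂᵐ × ℂᵐ with nontrivial stabilizer in H equals the union over h ≠ 1 of the fixed-point sets Fix(h) = {(z,w) : h·(z,w) = (z,w)}, each of which is a complex-linear subspace of ℂ^{2m} of complex codimension at least 2. Consequently, the free locus F := {(z,w) : the stabilizer of (z,w) in H is trivial} is open, dense, path-connected, and simply connected. -/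

import Mathlib

/-!
Statement 3: For a faithful unitary representation `ρ : H → U(m)` of a finite group `H`,
acting on `ℂᵐ × ℂᵐ` by `h·(z,w) = (ρ(h)z, conj(ρ(h))w)`, the set of points with nontrivial
stabilizer is the union over `h ≠ 1` of the fixed sets `Fix(h)`, each a complex subspace of
complex codimension at least 2; consequently the free locus is open, dense, path-connected
and simply connected.
-/

namespace Stmt3

/-- The action of `h` on `ℂᵐ × ℂᵐ`: `ρ(h)` on the first factor and its entrywise complex
conjugate (the dual representation) on the second. -/
noncomputable def act (m : ℕ) {H : Type} [Group H] (ρ : H →* Matrix.unitaryGroup (Fin m) ℂ)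
    (h : H) (x : (Fin m → ℂ) × (Fin m → ℂ)) : (Fin m → ℂ) × (Fin m → ℂ) :=
  (Matrix.mulVec (ρ h : Matrix (Fin m) (Fin m) ℂ) x.1,
   Matrix.mulVec ((ρ h : Matrix (Fin m) (Fin m) ℂ).map (starRingEnd ℂ)) x.2)

/-- The fixed-point set of `h`. -/
def Fix (m : ℕ) {H : Type} [Group H] (ρ : H →* Matrix.unitaryGroup (Fin m) ℂ)
    (h : H) : Set ((Fin m → ℂ) × (Fin m → ℂ)) :=
  {x | act m ρ h x = x}

/-- The free locus: points with trivial stabilizer in `H`. -/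
def F (m : ℕ) {H : Type} [Group H] (ρ : H →* Matrix.unitaryGroup (Fin m) ℂ) :
    Set ((Fin m → ℂ) × (Fin m → ℂ)) :=
  {x | ∀ h : H, act m ρ h x = x → h = 1}

/-!
The key point is that a finite union of real subspaces of codimension at least three has simply
connected complement `U`. A loop in the open set `U` is homotopic in `U` to a polynomial loop `p`.
The segment from `p s` to `q` avoids a subspace `S` as soon as `q ∉ S ⊔ ℝ ∙ p s`; for fixed `S`, the
union over `s` of these sets is the image of `S × ℝ × ℝ` under a smooth map into a space of larger
dimension, so a generic `q` works for every `s` and every `S`. The loop thus lies in the set of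
points that `q` sees inside `U`, which is star-shaped and hence contractible.

If `h` acts nontrivially on both factors, then its fixed space is a product of two proper complex
subspaces, so it has complex codimension at least two and real codimension at least four.
-/

open Module Set
open scoped unitInterval

section Dimension

variable {K V W : Type*} [DivisionRing K] [AddCommGroup V] [Module K V] [AddCommGroup W]
  [Module K W]

lemma fixedSubmodule_prodMap (f : V →ₗ[K] V) (g : W →ₗ[K] W) :
    (f.prodMap g).fixedSubmodule = f.fixedSubmodule.prod g.fixedSubmodule := by
  ext x
  simp [Prod.ext_iff]

variable [FiniteDimensional K V] [FiniteDimensional K W]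

lemma sup_span_singleton_ne_top {S : Submodule K V} (hS : finrank K S + 2 ≤ finrank K V)
    (x : V) : S ⊔ K ∙ x ≠ ⊤ := by
  intro htop
  have hsup := Submodule.finrank_add_le_finrank_add_finrank S (K ∙ x)
  have hspan : finrank K (K ∙ x) ≤ 1 := by simpa using finrank_span_le_card (R := K) {x}
  rw [htop, finrank_top] at hsup
  lia

lemma finrank_submodule_prod (P : Submodule K V) (Q : Submodule K W) :
    finrank K (P.prod Q) = finrank K P + finrank K Q := by
  have hrange : LinearMap.range (P.subtype.prodMap Q.subtype) = P.prod Q := by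
    simp [LinearMap.range_prodMap]
  rw [← hrange, LinearMap.finrank_range_of_inj
    (P.subtype_injective.prodMap Q.subtype_injective), finrank_prod]

lemma finrank_fixedSubmodule_prodMap_add_two_le {f : V →ₗ[K] V} {g : W →ₗ[K] W}
    (hf : f ≠ 1) (hg : g ≠ 1) :
    finrank K (f.prodMap g).fixedSubmodule + 2 ≤ finrank K (V × W) := by
  have hV := Submodule.finrank_lt (mt LinearMap.fixedSubmodule_eq_top_iff.1 hf)
  have hW := Submodule.finrank_lt (mt LinearMap.fixedSubmodule_eq_top_iff.1 hg)
  rw [fixedSubmodule_prodMap, finrank_submodule_prod, finrank_prod]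
  lia

end Dimension

section Segments

variable {E : Type*} [AddCommGroup E] [Module ℝ E]

lemma starConvex_setOf_segment_subset (q : E) (s : Set E) :
    StarConvex ℝ q {x | segment ℝ q x ⊆ s} :=
  starConvex_iff_segment_subset.2 fun x hx _ hy ↦
    ((convex_segment q x).segment_subset (left_mem_segment ℝ q x) hy).trans hx

lemma segment_subset_compl_of_notMem_sup_span {S : Submodule ℝ E} {q x : E} (hx : x ∉ S)
    (hq : q ∉ S ⊔ ℝ ∙ x) : segment ℝ q x ⊆ (S : Set E)ᶜ := by
  rintro _ ⟨u, v, -, -, huv, rfl⟩ hmem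
  rcases eq_or_ne u 0 with rfl | hu
  · obtain rfl : v = 1 := by simpa using huv
    exact hx (by simpa using hmem)
  · refine hq (((S ⊔ ℝ ∙ x).smul_mem_iff hu).1 ?_)
    rw [← add_sub_cancel_right (u • q) (v • x)]
    exact sub_mem (Submodule.mem_sup_left hmem)
      (Submodule.smul_mem _ v (Submodule.mem_sup_right (Submodule.mem_span_singleton_self x)))

lemma segment_subset_compl_iUnion_submodule {ι : Type*} {S : ι → Submodule ℝ E} {q x : E}
    (hx : x ∈ (⋃ i, (S i : Set E))ᶜ) (hq : ∀ i, q ∉ S i ⊔ ℝ ∙ x) :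
    segment ℝ q x ⊆ (⋃ i, (S i : Set E))ᶜ := by
  simp only [compl_iUnion, mem_iInter, subset_iInter_iff] at hx ⊢
  exact fun i ↦ segment_subset_compl_of_notMem_sup_span (hx i) (hq i)

end Segments

section Paths

variable {E : Type*} [AddCommGroup E] [Module ℝ E] [TopologicalSpace E]
  [IsTopologicalAddGroup E] [ContinuousSMul ℝ E] {s : Set E} {x y : s}

lemma homotopic_of_segment_subset {γ β : Path x y}
    (h : ∀ t, segment ℝ (γ t : E) (β t) ⊆ s) : γ.Homotopic β :=
  ⟨{ toFun := fun z ↦ ⟨AffineMap.lineMap (γ z.2 : E) (β z.2) (z.1 : ℝ),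
        h z.2 (segment_eq_image_lineMap ℝ (γ z.2 : E) (β z.2) ▸ mem_image_of_mem _ z.1.2)⟩
     continuous_toFun := by
      simp only [AffineMap.lineMap_apply]
      fun_prop
     map_zero_left := by simp
     map_one_left := by simp
     prop' := by rintro t _ (rfl | rfl) <;> simp }⟩

lemma homotopic_of_forall_segment_subset {γ β : Path x y} (q : E)
    (hγ : ∀ t, segment ℝ q (γ t) ⊆ s) (hβ : ∀ t, segment ℝ q (β t) ⊆ s) : γ.Homotopic β := by
  let K : Set E := {z | segment ℝ q z ⊆ s}
  have hKs : K ⊆ s := fun z hz ↦ hz (right_mem_segment ℝ q z)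
  have hx : segment ℝ q x ⊆ s := by simpa using hγ 0
  have hy : segment ℝ q y ⊆ s := by simpa using hγ 1
  have : ContractibleSpace K :=
    (starConvex_setOf_segment_subset q s).contractibleSpace ⟨x, hx⟩
  let toK (α : Path x y) (hα : ∀ t, segment ℝ q (α t) ⊆ s) : Path (⟨x, hx⟩ : K) ⟨y, hy⟩ :=
    { toFun := fun t ↦ ⟨α t, hα t⟩
      source' := by simp
      target' := by simp }
  exact (SimplyConnectedSpace.paths_homotopic (toK γ hγ) (toK β hβ)).map
    ⟨inclusion hKs, continuous_inclusion hKs⟩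

end Paths

section Smoothing

variable {E : Type*} [NormedAddCommGroup E] [NormedSpace ℝ E] {n : WithTop ℕ∞}

lemma exists_contDiff_eq_bernsteinApproximation (k : ℕ) (f : C(I, E)) :
    ∃ p : ℝ → E, ContDiff ℝ n p ∧ ∀ t : I, bernsteinApproximation k f t = p t :=
  ⟨fun t ↦ ∑ j : Fin (k + 1),
      ((k.choose j : ℝ) * t ^ (j : ℕ) * (1 - t) ^ (k - j)) • f (bernstein.z j),
    by fun_prop, fun t ↦ by simp [bernsteinApproximation.apply, bernstein_apply]⟩

lemma exists_contDiff_path_dist_lt {x y : E} (γ : Path x y) {ε : ℝ} (hε : 0 < ε) :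
    ∃ (p : ℝ → E) (β : Path x y),
      ContDiff ℝ n p ∧ (∀ t : I, β t = p t) ∧ ∀ t, dist (β t) (γ t) < ε := by
  obtain ⟨k, hk, hk0⟩ := (((bernsteinApproximation_uniform γ.toContinuousMap).eventually
    (Metric.ball_mem_nhds _ hε)).and (Filter.eventually_ne_atTop 0)).exists
  obtain ⟨p, hp, hpeq⟩ := exists_contDiff_eq_bernsteinApproximation (n := n) k γ.toContinuousMap
  refine ⟨p, ⟨bernsteinApproximation k γ.toContinuousMap, by simp, by simp [hk0]⟩, hp, hpeq, ?_⟩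
  exact fun t ↦ (ContinuousMap.dist_apply_le_dist t).trans_lt hk

lemma exists_contDiff_homotopic_of_isOpen {U : Set E} (hU : IsOpen U) {x y : U} (γ : Path x y) :
    ∃ (p : ℝ → E) (β : Path x y),
      ContDiff ℝ n p ∧ (∀ t : I, (β t : E) = p t) ∧ γ.Homotopic β := by
  obtain ⟨ε, hε, hεU⟩ := (isCompact_range (γ.map continuous_subtype_val).continuous)
    |>.exists_thickening_subset_open hU (range_subset_iff.2 fun t ↦ (γ t).2)
  obtain ⟨p, β, hp, hβp, hβγ⟩ :=
    exists_contDiff_path_dist_lt (n := n) (γ.map continuous_subtype_val) hε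
  have hball : ∀ t, Metric.ball (γ t : E) ε ⊆ U := fun t ↦
    (Metric.ball_subset_thickening (mem_range_self t) ε).trans hεU
  let βU : Path x y :=
    { toFun := fun t ↦ ⟨β t, hball t (hβγ t)⟩
      source' := by simp
      target' := by simp }
  refine ⟨p, βU, hp, hβp, homotopic_of_segment_subset fun t ↦ ?_⟩
  exact ((convex_ball _ ε).segment_subset (Metric.mem_ball_self hε) (hβγ t)).trans (hball t)

end Smoothing

section GenericPoints

variable {E : Type*} [NormedAddCommGroup E] [NormedSpace ℝ E] [FiniteDimensional ℝ E]
  {ι : Type*} [Countable ι]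

lemma dense_compl_iUnion_range_of_finrank_lt_finrank {G : ι → Type*}
    [∀ i, NormedAddCommGroup (G i)] [∀ i, NormedSpace ℝ (G i)]
    [∀ i, FiniteDimensional ℝ (G i)] {f : ∀ i, G i → E} (hf : ∀ i, ContDiff ℝ 1 (f i))
    (hG : ∀ i, finrank ℝ (G i) < finrank ℝ E) : Dense (⋃ i, range (f i))ᶜ := by
  rcases isEmpty_or_nonempty ι with _ | ⟨⟨i₀⟩⟩
  · simp
  refine dense_compl_of_dimH_lt_finrank ?_
  calc dimH (⋃ i, range (f i)) = ⨆ i, dimH (range (f i)) := dimH_iUnion _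
    _ ≤ (finrank ℝ E - 1 : ℕ) := iSup_le fun i ↦
        (hf i).dimH_range_le.trans (Nat.cast_le.2 (Nat.le_sub_one_of_lt (hG i)))
    _ < finrank ℝ E := Nat.cast_lt.2 (Nat.sub_one_lt_of_lt (hG i₀))

lemma dense_compl_iUnion_submodule {S : ι → Submodule ℝ E} (hS : ∀ i, S i ≠ ⊤) :
    Dense (⋃ i, (S i : Set E))ᶜ := by
  simpa using dense_compl_iUnion_range_of_finrank_lt_finrank
    (fun i ↦ (S i).subtypeL.contDiff) fun i ↦ Submodule.finrank_lt (hS i)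

lemma dense_setOf_forall_notMem_sup_span {G : Type*} [NormedAddCommGroup G] [NormedSpace ℝ G]
    [FiniteDimensional ℝ G] {S : ι → Submodule ℝ E} {p : G → E} (hp : ContDiff ℝ 1 p)
    (hS : ∀ i, finrank ℝ (S i) + finrank ℝ G + 2 ≤ finrank ℝ E) :
    Dense {q | ∀ i s, q ∉ S i ⊔ ℝ ∙ p s} := by
  let cone (i : ι) (z : S i × ℝ × G) : E := z.1 + z.2.1 • p z.2.2
  have hcone : ∀ i, ContDiff ℝ 1 (cone i) := fun i ↦
    ((S i).subtypeL.contDiff.comp contDiff_fst).add (by fun_prop)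
  have hdim : ∀ i, finrank ℝ (S i × ℝ × G) < finrank ℝ E := fun i ↦ by
    have := hS i
    simp only [finrank_prod, finrank_self]
    lia
  refine (dense_compl_iUnion_range_of_finrank_lt_finrank hcone hdim).mono ?_
  intro q hq i s hqs
  obtain ⟨x, hx, y, hy, rfl⟩ := Submodule.mem_sup.1 hqs
  obtain ⟨c, rfl⟩ := Submodule.mem_span_singleton.1 hy
  exact hq (mem_iUnion.2 ⟨i, (⟨x, hx⟩, c, s), rfl⟩)

end GenericPoints

section SubspaceArrangements

variable {ι : Type*}

lemma isOpen_compl_iUnion_submodule {𝕜 E : Type*} [NontriviallyNormedField 𝕜] [CompleteSpace 𝕜]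
    [NormedAddCommGroup E] [NormedSpace 𝕜 E] [FiniteDimensional 𝕜 E] [Finite ι]
    (S : ι → Submodule 𝕜 E) : IsOpen (⋃ i, (S i : Set E))ᶜ :=
  (isClosed_iUnion_of_finite fun i ↦ (S i).closed_of_finiteDimensional).isOpen_compl

variable {E : Type*} [NormedAddCommGroup E] [NormedSpace ℝ E] [FiniteDimensional ℝ E]
  {S : ι → Submodule ℝ E}

theorem isPathConnected_compl_iUnion_submodule [Countable ι]
    (hS : ∀ i, finrank ℝ (S i) + 2 ≤ finrank ℝ E) :
    IsPathConnected (⋃ i, (S i : Set E))ᶜ := by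
  have hproper : ∀ i, S i ≠ ⊤ := fun i ↦
    (le_sup_left.trans_lt (sup_span_singleton_ne_top (hS i) 0).lt_top).ne
  refine isPathConnected_iff.2 ⟨(dense_compl_iUnion_submodule hproper).nonempty, ?_⟩
  intro x hx y hy
  obtain ⟨q, hq⟩ := (dense_compl_iUnion_submodule (ι := ι ⊕ ι)
    (S := Sum.elim (fun i ↦ S i ⊔ ℝ ∙ x) fun i ↦ S i ⊔ ℝ ∙ y)
    (by simp [sup_span_singleton_ne_top, hS])).nonempty
  simp only [mem_compl_iff, mem_iUnion, Sum.exists, Sum.elim_inl, Sum.elim_inr, not_or,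
    not_exists] at hq
  exact (JoinedIn.of_segment_subset (segment_subset_compl_iUnion_submodule hx hq.1)).symm.trans
    (JoinedIn.of_segment_subset (segment_subset_compl_iUnion_submodule hy hq.2))

theorem isSimplyConnected_compl_iUnion_submodule [Finite ι]
    (hS : ∀ i, finrank ℝ (S i) + 3 ≤ finrank ℝ E) :
    IsSimplyConnected (⋃ i, (S i : Set E))ᶜ := by
  refine simply_connected_iff_loops_nullhomotopic.2 ⟨isPathConnected_iff_pathConnectedSpace.1
    (isPathConnected_compl_iUnion_submodule fun i ↦ by have := hS i; lia), fun x γ ↦ ?_⟩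
  obtain ⟨p, β, hp, hβp, hγβ⟩ :=
    exists_contDiff_homotopic_of_isOpen (isOpen_compl_iUnion_submodule S) γ
  obtain ⟨q, hq⟩ := (dense_setOf_forall_notMem_sup_span hp (by simpa using hS)).nonempty
  have hsegment : ∀ t, segment ℝ q (β t) ⊆ (⋃ i, (S i : Set E))ᶜ := fun t ↦
    segment_subset_compl_iUnion_submodule (β t).2 fun i ↦ hβp t ▸ hq i t
  exact hγβ.trans (homotopic_of_forall_segment_subset q hsegment
    fun _ ↦ by simpa using hsegment 0)

end SubspaceArrangements

section ComplexArrangements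

lemma finrank_restrictScalars_real {E : Type*} [AddCommGroup E] [Module ℂ E]
    (P : Submodule ℂ E) : finrank ℝ (P.restrictScalars ℝ) = 2 * finrank ℂ P :=
  finrank_real_of_complex P

variable {ι E : Type*} [NormedAddCommGroup E] [NormedSpace ℂ E] [FiniteDimensional ℂ E]
  {S : ι → Submodule ℂ E}

lemma dense_compl_iUnion_complex_submodule [Countable ι] (hS : ∀ i, S i ≠ ⊤) :
    Dense (⋃ i, (S i : Set E))ᶜ :=
  dense_compl_iUnion_submodule (S := fun i ↦ (S i).restrictScalars ℝ) (by simpa using hS)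

theorem isPathConnected_compl_iUnion_complex_submodule [Countable ι] (hS : ∀ i, S i ≠ ⊤) :
    IsPathConnected (⋃ i, (S i : Set E))ᶜ :=
  isPathConnected_compl_iUnion_submodule (S := fun i ↦ (S i).restrictScalars ℝ) fun i ↦ by
    have := Submodule.finrank_lt (hS i)
    rw [finrank_restrictScalars_real, finrank_real_of_complex]
    lia

theorem isSimplyConnected_compl_iUnion_complex_submodule [Finite ι]
    (hS : ∀ i, finrank ℂ (S i) + 2 ≤ finrank ℂ E) :
    IsSimplyConnected (⋃ i, (S i : Set E))ᶜ :=
  isSimplyConnected_compl_iUnion_submodule (S := fun i ↦ (S i).restrictScalars ℝ) fun i ↦ by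
    have := hS i
    rw [finrank_restrictScalars_real, finrank_real_of_complex]
    lia

end ComplexArrangements

section Representations

variable {H : Type*} [Monoid H]

/-- The free locus of a linear representation: the vectors with trivial stabilizer. -/
def freeLocus {R E : Type*} [Semiring R] [AddCommMonoid E] [Module R E]
    (π : Representation R H E) : Set E :=
  {x | ∀ h, π h x = x → h = 1}

lemma freeLocus_eq_compl_iUnion_fixedSubmodule {R E : Type*} [Semiring R] [AddCommMonoid E]
    [Module R E] (π : Representation R H E) :
    freeLocus π = (⋃ h : {h : H // h ≠ 1}, ((π h).fixedSubmodule : Set E))ᶜ := by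
  ext x
  simp [freeLocus, not_imp_not]

/-- The representation on column vectors attached to a homomorphism into square matrices. It is
applied below to `ρ` and to its entrywise complex conjugate. -/
def mulVecRepresentation {R n : Type*} [CommSemiring R] [Fintype n] [DecidableEq n]
    (ρ : H →* Matrix n n R) : Representation R H (n → R) :=
  (Matrix.toLinAlgEquiv' : Matrix n n R ≃ₐ[R] _).toMonoidHom.comp ρ

lemma mulVecRepresentation_injective {R n : Type*} [CommSemiring R] [Fintype n] [DecidableEq n]
    {ρ : H →* Matrix n n R} (hρ : Function.Injective ρ) :
    Function.Injective (mulVecRepresentation ρ) :=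
  Matrix.toLinAlgEquiv'.injective.comp hρ

end Representations

theorem nontrivial_stabilizer_locus_and_free_locus_general {H V W : Type*} [Monoid H] [Finite H]
    [NormedAddCommGroup V] [NormedSpace ℂ V] [FiniteDimensional ℂ V]
    [NormedAddCommGroup W] [NormedSpace ℂ W] [FiniteDimensional ℂ W]
    (ρV : Representation ℂ H V) (ρW : Representation ℂ H W)
    (hρV : Function.Injective ρV) (hρW : Function.Injective ρW) :
    ({x | ∃ h : H, h ≠ 1 ∧ ρV.prod ρW h x = x} =
        ⋃ (h : H) (_ : h ≠ 1), {x | ρV.prod ρW h x = x}) ∧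
    (∀ h : H, h ≠ 1 →
      ∃ S : Submodule ℂ (V × W),
        (S : Set (V × W)) = {x | ρV.prod ρW h x = x} ∧
        finrank ℂ S + 2 ≤ finrank ℂ (V × W)) ∧
    IsOpen (freeLocus (ρV.prod ρW)) ∧ Dense (freeLocus (ρV.prod ρW)) ∧
      IsPathConnected (freeLocus (ρV.prod ρW)) ∧ SimplyConnectedSpace (freeLocus (ρV.prod ρW)) := by
  have hcodim : ∀ h ≠ 1,
      finrank ℂ (ρV.prod ρW h).fixedSubmodule + 2 ≤ finrank ℂ (V × W) := fun h hh ↦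
    finrank_fixedSubmodule_prodMap_add_two_le ((map_ne_one_iff ρV hρV).2 hh)
      ((map_ne_one_iff ρW hρW).2 hh)
  have hproper : ∀ h : {h : H // h ≠ 1}, (ρV.prod ρW h).fixedSubmodule ≠ ⊤ := fun h htop ↦ by
    have := hcodim h h.2
    rw [htop, finrank_top] at this
    lia
  refine ⟨by ext; simp, fun h hh ↦ ⟨_, by ext; simp, hcodim h hh⟩, ?_⟩
  rw [freeLocus_eq_compl_iUnion_fixedSubmodule]
  exact ⟨isOpen_compl_iUnion_submodule _, dense_compl_iUnion_complex_submodule hproper,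
    isPathConnected_compl_iUnion_complex_submodule hproper,
    isSimplyConnected_compl_iUnion_complex_submodule fun h ↦ hcodim h h.2⟩

theorem nontrivial_stabilizer_locus_and_free_locus
    (m : ℕ) (hm : 1 ≤ m) (H : Type) [Group H] [Finite H]
    (ρ : H →* Matrix.unitaryGroup (Fin m) ℂ) (hρ : Function.Injective ρ) :
    ({x | ∃ h : H, h ≠ 1 ∧ act m ρ h x = x} =
        ⋃ (h : H) (_ : h ≠ 1), Fix m ρ h) ∧
    (∀ h : H, h ≠ 1 →
      ∃ S : Submodule ℂ ((Fin m → ℂ) × (Fin m → ℂ)),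
        (S : Set ((Fin m → ℂ) × (Fin m → ℂ))) = Fix m ρ h ∧
        Module.finrank ℂ S + 2 ≤ 2 * m) ∧
    IsOpen (F m ρ) ∧ Dense (F m ρ) ∧ IsPathConnected (F m ρ) ∧
      SimplyConnectedSpace ↥(F m ρ) := by
  let A : H →* Matrix (Fin m) (Fin m) ℂ := (Matrix.unitaryGroup (Fin m) ℂ).subtype.comp ρ
  let conj : Matrix (Fin m) (Fin m) ℂ →+* Matrix (Fin m) (Fin m) ℂ := (starRingEnd ℂ).mapMatrix
  have hA : Function.Injective A := Subtype.val_injective.comp hρ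
  have hconj : Function.Injective conj := Matrix.map_injective (starRingEnd ℂ).injective
  have hdim : finrank ℂ ((Fin m → ℂ) × (Fin m → ℂ)) = 2 * m := by simp [two_mul]
  exact hdim ▸ nontrivial_stabilizer_locus_and_free_locus_general (mulVecRepresentation A)
    (mulVecRepresentation (conj.toMonoidHom.comp A)) (mulVecRepresentation_injective hA)
    (mulVecRepresentation_injective (hconj.comp hA))

end Stmt3
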